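/- Let α ∈ (0,1). Then W_{-α,1}(-2 t^{1-α}) / W_{-α,1}(-t^{1-α}) → 0 as t → ∞. -/

import Mathlib

open Real Filter Topology

/-- The Wright function `W_{λ,μ}(z) = ∑ z^n / (n! Γ(λn+μ))`.
(In Mathlib, `Real.Gamma` vanishes at nonpositive integers, so `1/Γ(s) = 0` there.) -/
noncomputable def wrightFn (l μ z : ℝ) : ℝ :=
  ∑' n : ℕ, z ^ n / (n.factorial * Real.Gamma (l * n + μ))

/-!
Euler's reflection formula turns the series of `W_{-α,1}(-x)` into a Hankel integral of
`e^{z - x z^α} / z` along the two sides of the negative real axis. Deforming the contour to the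
curve `log z = ρ(θ) + iθ` on which the exponent `z - x z^α` is real gives Kanter's representation
`W_{-α,1}(-x) = (1/π) ∫_0^π exp(-x^{1/(1-α)} A(θ)) dθ`, where `A` is bounded below by a positive
constant `m`. Hence replacing `x` by `c x`, with `1 < c`, multiplies the function by at most
`exp(-(c^{1/(1-α)} - 1) m x^{1/(1-α)})`, which tends to zero.
-/

open MeasureTheory Set
open Complex (I)

theorem hasSum_pow_succ_div_factorial (z : ℂ) :
    HasSum (fun n : ℕ ↦ z ^ (n + 1) / (n + 1).factorial) (Complex.exp z - 1) := by
  have h := NormedSpace.expSeries_div_hasSum_exp z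
  rw [← Complex.exp_eq_exp_ℂ] at h
  simpa using (hasSum_nat_add_iff' 1).2 h

theorem norm_exp_sub_one_le_norm_mul_exp (z : ℂ) :
    ‖Complex.exp z - 1‖ ≤ ‖z‖ * exp ‖z‖ := by
  simpa using Complex.norm_exp_sub_sum_le_norm_mul_exp z 1

theorem inv_Gamma_one_sub {s : ℝ} (hs : 0 < s) :
    (Gamma (1 - s))⁻¹ = sin (π * s) / π * Gamma s := by
  have hΓ : Gamma s ≠ 0 := (Gamma_pos_of_pos hs).ne'
  have hreflection : Gamma (1 - s) = π / sin (π * s) / Gamma s :=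
    eq_div_of_mul_eq hΓ ((mul_comm _ _).trans (Gamma_mul_Gamma_one_sub s))
  rw [hreflection, inv_div, div_div_eq_mul_div]
  ring

section HankelIntegral

variable {α : ℝ}

theorem exists_mul_rpow_le_add (h0 : 0 < α) (h1 : α < 1) {x : ℝ} (hx : 0 ≤ x) :
    ∃ C, ∀ r, 0 ≤ r → x * r ^ α ≤ r / 2 + C := by
  have h1' : 0 < 1 - α := sub_pos.2 h1
  set b := (x * 2 ^ α) ^ (1 / (1 - α)) with hb
  refine ⟨b, fun r hr ↦ ?_⟩
  have hbα : b ^ (1 - α) = x * 2 ^ α := by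
    rw [hb, ← rpow_mul (by positivity), one_div_mul_cancel h1'.ne', rpow_one]
  calc x * r ^ α = (r / 2) ^ α * b ^ (1 - α) := by
        rw [hbα, div_rpow hr zero_le_two]
        field_simp
    _ ≤ α * (r / 2) + (1 - α) * b :=
        geom_mean_le_arith_mean2_weighted h0.le h1'.le (by positivity) (by positivity) (by ring)
    _ ≤ r / 2 + b := by
        have : 0 ≤ b := by positivity
        nlinarith

theorem integrableOn_rpow_mul_exp_mul_rpow_sub (h0 : 0 < α) (h1 : α < 1) {x s : ℝ}
    (hx : 0 ≤ x) (hs : -1 < s) :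
    IntegrableOn (fun r ↦ r ^ s * exp (x * r ^ α - r)) (Ioi 0) := by
  obtain ⟨C, hC⟩ := exists_mul_rpow_le_add h0 h1 hx
  have hmaj : IntegrableOn (fun r : ℝ ↦ exp C * (r ^ s * exp (-(1 / 2) * r ^ (1 : ℝ)))) (Ioi 0) :=
    (integrableOn_rpow_mul_exp_neg_mul_rpow hs one_pos (by norm_num)).const_mul _
  refine hmaj.mono' (by fun_prop) (ae_restrict_of_forall_mem measurableSet_Ioi fun r hr ↦ ?_)
  have hr : 0 < r := hr
  calc ‖r ^ s * exp (x * r ^ α - r)‖ = r ^ s * exp (x * r ^ α - r) :=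
        norm_of_nonneg (by positivity)
    _ ≤ r ^ s * exp (C + -(1 / 2) * r) := by
        gcongr
        linarith [hC r hr.le]
    _ = exp C * (r ^ s * exp (-(1 / 2) * r ^ (1 : ℝ))) := by
        rw [exp_add, rpow_one]
        ring

/-- The integrand `e^{-r} (e^{ζ r^α} - 1) / r` of the Hankel contour integral of the Wright
function along the branch cut; there `ζ = -x e^{iαπ}`. The `-1` removes the pole at `r = 0`
without changing the imaginary part. -/
noncomputable def hankelIntegrand (α : ℝ) (ζ : ℂ) (r : ℝ) : ℂ :=
  (exp (-r) / r : ℝ) * (Complex.exp (ζ * (r ^ α : ℝ)) - 1)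

theorem integrableOn_hankelIntegrand (h0 : 0 < α) (h1 : α < 1) (ζ : ℂ) :
    IntegrableOn (hankelIntegrand α ζ) (Ioi 0) := by
  have hmaj : IntegrableOn (fun r ↦ ‖ζ‖ * (r ^ (α - 1) * exp (‖ζ‖ * r ^ α - r))) (Ioi 0) :=
    (integrableOn_rpow_mul_exp_mul_rpow_sub h0 h1 (norm_nonneg ζ) (by linarith)).const_mul _
  refine hmaj.mono' (by unfold hankelIntegrand; fun_prop)
    (ae_restrict_of_forall_mem measurableSet_Ioi fun r hr ↦ ?_)
  have hr : 0 < r := hr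
  have hnorm : ‖ζ * (r ^ α : ℝ)‖ = ‖ζ‖ * r ^ α := by
    rw [norm_mul, Complex.norm_of_nonneg (by positivity)]
  calc ‖hankelIntegrand α ζ r‖
      = exp (-r) / r * ‖Complex.exp (ζ * (r ^ α : ℝ)) - 1‖ := by
        rw [hankelIntegrand, norm_mul, Complex.norm_of_nonneg (by positivity)]
    _ ≤ exp (-r) / r * (‖ζ‖ * r ^ α * exp (‖ζ‖ * r ^ α)) := by
        gcongr
        simpa only [hnorm] using norm_exp_sub_one_le_norm_mul_exp (ζ * (r ^ α : ℝ))
    _ = ‖ζ‖ * (r ^ (α - 1) * exp (‖ζ‖ * r ^ α - r)) := by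
        rw [rpow_sub_one hr.ne', sub_eq_add_neg, exp_add]
        ring

/-- The `n`-th term of the expansion of `hankelIntegrand` in powers of `ζ`, where `1 ≤ n`. -/
noncomputable def hankelTerm (α : ℝ) (ζ : ℂ) (n : ℕ) (r : ℝ) : ℂ :=
  (exp (-r) / r : ℝ) * ((ζ * (r ^ α : ℝ)) ^ n / n.factorial)

theorem hasSum_hankelTerm (α : ℝ) (ζ : ℂ) (r : ℝ) :
    HasSum (fun n : ℕ ↦ hankelTerm α ζ (n + 1) r) (hankelIntegrand α ζ r) :=
  (hasSum_pow_succ_div_factorial _).mul_left _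

theorem norm_hankelTerm (α : ℝ) (ζ : ℂ) (n : ℕ) {r : ℝ} (hr : 0 ≤ r) :
    ‖hankelTerm α ζ n r‖ = (hankelTerm α ‖ζ‖ n r).re := by
  rw [hankelTerm, norm_mul, norm_div, norm_pow, norm_mul, Complex.norm_of_nonneg (by positivity),
    Complex.norm_of_nonneg (by positivity), Complex.norm_natCast, hankelTerm]
  norm_cast

theorem integral_hankelTerm (h0 : 0 < α) (ζ : ℂ) {n : ℕ} (hn : n ≠ 0) :
    ∫ r in Ioi 0, hankelTerm α ζ n r = ζ ^ n / n.factorial * Gamma (α * n) := by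
  have hpos : 0 < α * n := by positivity
  calc ∫ r in Ioi 0, hankelTerm α ζ n r
      = ∫ r in Ioi (0 : ℝ), ζ ^ n / n.factorial * ((exp (-r) * r ^ (α * n - 1) : ℝ) : ℂ) := by
        refine setIntegral_congr_fun measurableSet_Ioi fun r (hr : 0 < r) ↦ ?_
        simp only [hankelTerm, rpow_sub_one hr.ne', rpow_mul hr.le, rpow_natCast, mul_pow]
        push_cast
        ring
    _ = ζ ^ n / n.factorial * Gamma (α * n) := by
        rw [integral_const_mul, integral_complex_ofReal, Gamma_eq_integral hpos]

theorem hasSum_integral_hankelIntegrand (h0 : 0 < α) (h1 : α < 1) (ζ : ℂ) :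
    HasSum (fun n : ℕ ↦ ζ ^ (n + 1) / (n + 1).factorial * Gamma (α * (n + 1 : ℕ)))
      (∫ r in Ioi 0, hankelIntegrand α ζ r) := by
  simp only [← integral_hankelTerm h0 ζ (Nat.succ_ne_zero _)]
  have hbound (r : ℝ) : HasSum (fun n ↦ (hankelTerm α ‖ζ‖ (n + 1) r).re)
      (hankelIntegrand α ‖ζ‖ r).re :=
    Complex.hasSum_re (hasSum_hankelTerm α ‖ζ‖ r)
  refine hasSum_integral_of_dominated_convergence
    (fun n r ↦ (hankelTerm α ‖ζ‖ (n + 1) r).re) (fun n ↦ by unfold hankelTerm; fun_prop)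
    (fun n ↦ ae_restrict_of_forall_mem measurableSet_Ioi fun r hr ↦
      (norm_hankelTerm α ζ (n + 1) (mem_Ioi.1 hr).le).le)
    (ae_of_all _ fun r ↦ (hbound r).summable) ?_ (ae_of_all _ (hasSum_hankelTerm α ζ))
  simp only [(hbound _).tsum_eq]
  exact (integrableOn_hankelIntegrand h0 h1 ‖ζ‖).re

theorem wrightFn_neg_eq_one_add_integral (h0 : 0 < α) (h1 : α < 1) (x : ℝ) :
    wrightFn (-α) 1 (-x) =
      1 + (∫ r in Ioi 0, (hankelIntegrand α (-x * Complex.exp (α * π * I)) r).im) / π := by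
  set ζ : ℂ := -x * Complex.exp (α * π * I) with hζ
  have him : ∀ n : ℕ, (ζ ^ n).im = (-x) ^ n * sin (π * (α * n)) := by
    intro n
    have : ζ ^ n = (((-x) ^ n : ℝ) : ℂ) * Complex.exp ((π * (α * n) : ℝ) * I) := by
      rw [hζ, mul_pow, ← Complex.exp_nat_mul]
      push_cast
      ring_nf
    rw [this, Complex.im_ofReal_mul, Complex.exp_ofReal_mul_I_im]
  have hint : (∫ r in Ioi 0, hankelIntegrand α ζ r).im =
      ∫ r in Ioi 0, (hankelIntegrand α ζ r).im :=
    (integral_im (integrableOn_hankelIntegrand h0 h1 ζ)).symm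
  have hsum := (Complex.hasSum_im (hasSum_integral_hankelIntegrand h0 h1 ζ)).div_const π
  rw [hint] at hsum
  have hterm : ∀ n : ℕ, (ζ ^ (n + 1) / (n + 1).factorial * Gamma (α * (n + 1 : ℕ))).im / π =
      (-x) ^ (n + 1) / ((n + 1).factorial * Gamma (-α * (n + 1 : ℕ) + 1)) := by
    intro n
    have hpos : 0 < α * (n + 1 : ℕ) := by positivity
    rw [show -α * (n + 1 : ℕ) + 1 = 1 - α * (n + 1 : ℕ) by ring, Complex.im_mul_ofReal,
      Complex.div_natCast_im, him, ← div_div, div_eq_mul_inv _ (Gamma _), inv_Gamma_one_sub hpos]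
    ring
  simp only [hterm] at hsum
  have := (hasSum_nat_add_iff (f := fun n : ℕ ↦
    (-x) ^ n / (n.factorial * Gamma (-α * n + 1))) 1).1 hsum
  rw [wrightFn, this.tsum_eq]
  simp [add_comm]

end HankelIntegral
theorem norm_sub_le_of_hasDerivAt_of_vertical {H f : ℂ → ℂ} (hH : ∀ w, HasDerivAt H (f w) w)
    {u a b C : ℝ} (hab : a ≤ b) (hC : ∀ s ∈ Icc a b, ‖f (u + s * I)‖ ≤ C) :
    ‖H (u + b * I) - H (u + a * I)‖ ≤ C * (b - a) := by
  have hline (s : ℝ) : HasDerivAt (fun s : ℝ ↦ (u : ℂ) + s * I) I s := by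
    simpa using ((hasDerivAt_id s).ofReal_comp.mul_const I).const_add (u : ℂ)
  have hderiv (s : ℝ) : HasDerivAt (fun s : ℝ ↦ H (u + s * I)) (f (u + s * I) * I) s :=
    (hH _).comp_of_eq s (hline s) rfl
  refine norm_image_sub_le_of_norm_deriv_le_segment' (fun s _ ↦ (hderiv s).hasDerivWithinAt)
    (fun s hs ↦ ?_) b ⟨hab, le_rfl⟩
  simpa using hC s (Ico_subset_Icc_self hs)

theorem im_eq_of_hasDerivAt_of_im_eq_zero {H f : ℂ → ℂ} (hH : ∀ w, HasDerivAt H (f w) w)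
    (hf : ∀ u : ℝ, (f u).im = 0) (u v : ℝ) : (H u).im = (H v).im := by
  have hderiv (s : ℝ) : HasDerivAt (fun s : ℝ ↦ (H s).im) 0 s :=
    (Complex.imCLM.hasFDerivAt.comp_hasDerivAt s (hH s).comp_ofReal).congr_deriv (hf s)
  exact is_const_of_deriv_eq_zero (fun s ↦ (hderiv s).differentiableAt)
    (fun s ↦ (hderiv s).deriv) u v

section Contour

variable {α x : ℝ}

/-- The exponent `z - x z^α` of the Hankel integral of the Wright function in the logarithmic
coordinate `z = e^w`. -/
noncomputable def wrightPhase (α x : ℝ) (w : ℂ) : ℂ :=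
  Complex.exp w - x * Complex.exp (α * w)

theorem re_wrightPhase (α x u θ : ℝ) :
    (wrightPhase α x (u + θ * I)).re =
      exp u * cos θ - x * (exp (α * u) * cos (α * θ)) := by
  simp [wrightPhase, Complex.exp_re]

theorem im_wrightPhase (α x u θ : ℝ) :
    (wrightPhase α x (u + θ * I)).im =
      exp u * sin θ - x * (exp (α * u) * sin (α * θ)) := by
  simp [wrightPhase, Complex.exp_im]

theorem norm_wrightPhase_le (α x u θ : ℝ) :
    ‖wrightPhase α x (u + θ * I)‖ ≤ exp u + |x| * exp (α * u) := by
  refine (norm_sub_le _ _).trans_eq ?_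
  simp [Complex.norm_exp]

theorem wrightPhase_log_add_pi_mul_I (α x : ℝ) {r : ℝ} (hr : 0 < r) :
    wrightPhase α x (log r + π * I) =
      (-r : ℝ) + -x * Complex.exp (α * π * I) * (r ^ α : ℝ) := by
  rw [wrightPhase, mul_add, Complex.exp_add, Complex.exp_add, Complex.exp_pi_mul_I,
    ← Complex.ofReal_exp, exp_log hr, ← Complex.ofReal_mul, ← Complex.ofReal_exp, mul_comm α,
    ← rpow_def_of_pos hr]
  push_cast
  ring_nf

theorem exists_primitive_exp_wrightPhase (α x : ℝ) :
    ∃ H : ℂ → ℂ, (∀ w, HasDerivAt H (Complex.exp (wrightPhase α x w)) w) ∧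
      ∀ u : ℝ, (H u).im = 0 := by
  have hd : Differentiable ℂ fun w ↦ Complex.exp (wrightPhase α x w) := by
    unfold wrightPhase
    fun_prop
  obtain ⟨H, hH0, hH⟩ := hd.isExactOn_univ.with_val_at 0 0
  have hreal (u : ℝ) : (Complex.exp (wrightPhase α x u)).im = 0 := by
    have := im_wrightPhase α x u 0
    simp_all [Complex.exp_im]
  refine ⟨H, fun w ↦ hH w trivial, fun u ↦ ?_⟩
  simpa [hH0] using im_eq_of_hasDerivAt_of_im_eq_zero (fun w ↦ hH w trivial) hreal u 0

section Primitive

variable {H : ℂ → ℂ} (hH : ∀ w, HasDerivAt H (Complex.exp (wrightPhase α x w)) w)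
  (hreal : ∀ u : ℝ, (H u).im = 0)

include hH

theorem hasDerivAt_im_primitive_log (r : ℝ) (hr : 0 < r) :
    HasDerivAt (fun r : ℝ ↦ (H (log r + π * I)).im)
      (hankelIntegrand α (-x * Complex.exp (α * π * I)) r).im r := by
  have hpath : HasDerivAt (fun r : ℝ ↦ ((log r : ℝ) : ℂ) + π * I) (r⁻¹ : ℝ) r :=
    (hasDerivAt_log hr.ne').ofReal_comp.add_const _
  refine (Complex.imCLM.hasFDerivAt.comp_hasDerivAt r
    ((hH _).comp_of_eq r hpath rfl)).congr_deriv ?_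
  rw [wrightPhase_log_add_pi_mul_I α x hr, Complex.exp_add, ← Complex.ofReal_exp,
    hankelIntegrand, Complex.im_ofReal_mul, Complex.imCLM_apply, Complex.sub_im, Complex.one_im,
    Complex.im_mul_ofReal, Complex.im_ofReal_mul]
  ring

theorem hasDerivAt_im_primitive_path {ρ : ℝ → ℝ} {ρ' θ : ℝ} (hρ : HasDerivAt ρ ρ' θ)
    (him : (wrightPhase α x (ρ θ + θ * I)).im = 0) :
    HasDerivAt (fun θ : ℝ ↦ (H (ρ θ + θ * I)).im)
      (rexp (wrightPhase α x (ρ θ + θ * I)).re) θ := by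
  have hpath : HasDerivAt (fun θ : ℝ ↦ (ρ θ : ℂ) + θ * I) (ρ' + I) θ := by
    simpa using hρ.ofReal_comp.fun_add ((hasDerivAt_id θ).ofReal_comp.mul_const I)
  refine (Complex.imCLM.hasFDerivAt.comp_hasDerivAt θ
    ((hH _).comp_of_eq θ hpath rfl)).congr_deriv ?_
  simp [Complex.exp_re, Complex.exp_im, him]

include hreal in
theorem tendsto_im_primitive_atBot (h0 : 0 < α) :
    Tendsto (fun u : ℝ ↦ (H (u + π * I)).im) atBot (𝓝 π) := by
  let m : ℝ → ℝ := fun u ↦ exp u + |x| * exp (α * u)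
  have hm : Tendsto m atBot (𝓝 0) := by
    have hα : Tendsto (fun u ↦ exp (α * u)) atBot (𝓝 0) :=
      tendsto_exp_atBot.comp (tendsto_id.const_mul_atBot h0)
    simpa [m] using tendsto_exp_atBot.add (hα.const_mul |x|)
  have hbound (u : ℝ) : ‖(H (u + π * I)).im - π‖ ≤ m u * exp (m u) * (π - 0) := by
    have hG (w : ℂ) : HasDerivAt (fun w ↦ H w - w) (Complex.exp (wrightPhase α x w) - 1) w :=
      (hH w).sub (hasDerivAt_id w)
    have hG_deriv (s : ℝ) : ‖Complex.exp (wrightPhase α x (u + s * I)) - 1‖ ≤ m u * exp (m u) := by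
      refine (norm_exp_sub_one_le_norm_mul_exp _).trans ?_
      have := norm_wrightPhase_le α x u s
      gcongr
    have hedge := norm_sub_le_of_hasDerivAt_of_vertical hG pi_pos.le fun s _ ↦ hG_deriv s
    refine le_trans (le_of_eq_of_le ?_ (Complex.abs_im_le_norm _)) hedge
    simp [hreal]
  rw [tendsto_iff_norm_sub_tendsto_zero]
  refine squeeze_zero (fun _ ↦ norm_nonneg _) hbound ?_
  simpa using (hm.mul ((continuous_exp.tendsto 0).comp hm)).mul_const (π - 0)

include hreal in
theorem tendsto_im_primitive_atTop (h0 : 0 < α) (h1 : α < 1) :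
    Tendsto (fun u : ℝ ↦ (H (u + π * I)).im) atTop
      (𝓝 (π + ∫ r in Ioi 0, (hankelIntegrand α (-x * Complex.exp (α * π * I)) r).im)) := by
  set J : ℝ → ℝ := fun r ↦ (hankelIntegrand α (-x * Complex.exp (α * π * I)) r).im
  have hJ : IntegrableOn J (Ioi 0) := (integrableOn_hankelIntegrand h0 h1 _).im
  have hderiv := hasDerivAt_im_primitive_log hH
  have hprimitive (u : ℝ) : π + ∫ r in (0 : ℝ)..exp u, J r = (H (u + π * I)).im := by
    rw [intervalIntegral.integral_eq_sub_of_hasDerivAt_of_tendsto (exp_pos u)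
      (fun r hr ↦ hderiv r hr.1)
      ((intervalIntegrable_iff_integrableOn_Ioc_of_le (exp_pos u).le).2
        (hJ.mono_set Ioc_subset_Ioi_self))
      ((tendsto_im_primitive_atBot hH hreal h0).comp tendsto_log_nhdsGT_zero)
      ((hderiv _ (exp_pos u)).continuousAt.tendsto.mono_left nhdsWithin_le_nhds), log_exp]
    ring
  exact ((intervalIntegral_tendsto_integral_Ioi 0 hJ tendsto_exp_atTop).const_add π).congr
    hprimitive

end Primitive

theorem eventually_re_wrightPhase_nonpos (h1 : α < 1) (hx : 0 ≤ x) :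
    ∀ᶠ u : ℝ in atTop, ∀ θ : ℝ, θ ∈ Icc (2 * π / 3) π → (wrightPhase α x (u + θ * I)).re ≤ 0 := by
  have hexp : Tendsto (fun u ↦ exp ((1 - α) * u)) atTop atTop :=
    tendsto_exp_atTop.comp (tendsto_id.const_mul_atTop (sub_pos.2 h1))
  filter_upwards [hexp.eventually_ge_atTop (2 * x)] with u hu θ hθ
  have hcos : cos θ ≤ -(1 / 2) := by
    calc cos θ ≤ cos (π - π / 3) :=
          cos_le_cos_of_nonneg_of_le_pi (by linarith [pi_pos]) hθ.2 (by linarith [hθ.1])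
      _ = -(1 / 2) := by rw [cos_pi_sub, cos_pi_div_three]
  have hsplit : exp u = exp ((1 - α) * u) * exp (α * u) := by
    rw [← exp_add]
    ring_nf
  calc (wrightPhase α x (u + θ * I)).re
      = exp u * cos θ - x * exp (α * u) * cos (α * θ) := by rw [re_wrightPhase, mul_assoc x]
    _ ≤ exp u * -(1 / 2) - x * exp (α * u) * -1 := by
        gcongr
        exact neg_one_le_cos _
    _ = (2 * x - exp ((1 - α) * u)) * exp (α * u) / 2 := by rw [hsplit]; ring
    _ ≤ 0 := by
        have := mul_nonneg (sub_nonneg.2 hu) (exp_pos (α * u)).le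
        linarith

theorem tendsto_primitive_sub_nhdsLT_pi (h1 : α < 1) (hx : 0 ≤ x) {H : ℂ → ℂ}
    (hH : ∀ w, HasDerivAt H (Complex.exp (wrightPhase α x w)) w) {ρ : ℝ → ℝ}
    (hρ : Tendsto ρ (𝓝[<] π) atTop) :
    Tendsto (fun θ ↦ H (ρ θ + π * I) - H (ρ θ + θ * I)) (𝓝[<] π) (𝓝 0) := by
  have hlength : Tendsto (fun θ ↦ π - θ) (𝓝[<] π) (𝓝 0) := by
    have : Continuous fun θ ↦ π - θ := by fun_prop
    simpa using (this.tendsto π).mono_left nhdsWithin_le_nhds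
  refine squeeze_zero_norm' ?_ hlength
  filter_upwards [hρ.eventually (eventually_re_wrightPhase_nonpos h1 hx),
    Ioo_mem_nhdsLT (show 2 * π / 3 < π by linarith [pi_pos])] with θ hre hθ
  refine (norm_sub_le_of_hasDerivAt_of_vertical hH hθ.2.le fun s hs ↦ ?_).trans_eq (one_mul _)
  rw [Complex.norm_exp, exp_le_one_iff]
  exact hre s (Icc_subset_Icc_left hθ.1.le hs)

end Contour

section SinRatio

variable {α θ : ℝ}

/-- The ratio `sin (αθ) / sin θ`, the building block of the steepest-descent curve and of the
Zolotarev function. -/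
noncomputable def sinRatio (α θ : ℝ) : ℝ :=
  sin (α * θ) / sin θ

theorem le_sinRatio (h0 : 0 ≤ α) (h1 : α ≤ 1) (hθ : θ ∈ Ioo 0 π) : α ≤ sinRatio α θ := by
  rw [sinRatio, le_div_iff₀ (sin_pos_of_mem_Ioo hθ)]
  simpa using strictConcaveOn_sin_Icc.concaveOn.2 (Ioo_subset_Icc_self hθ)
    (left_mem_Icc.2 pi_pos.le) h0 (sub_nonneg.2 h1) (add_sub_cancel α 1)

theorem sinRatio_pos (h0 : 0 < α) (h1 : α ≤ 1) (hθ : θ ∈ Ioo 0 π) : 0 < sinRatio α θ :=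
  h0.trans_le (le_sinRatio h0.le h1 hθ)

theorem tendsto_sinRatio_nhdsGT_zero (α : ℝ) : Tendsto (sinRatio α) (𝓝[>] 0) (𝓝 α) := by
  have hsinc : ContinuousAt (fun θ ↦ α * sinc (α * θ) / sinc θ) 0 := by
    have := continuous_sinc
    exact ContinuousAt.div (by fun_prop) (by fun_prop) (by simp)
  have hlim : Tendsto (fun θ ↦ α * sinc (α * θ) / sinc θ) (𝓝[>] 0) (𝓝 α) := by
    simpa using hsinc.tendsto.mono_left nhdsWithin_le_nhds
  refine hlim.congr' ?_
  filter_upwards [self_mem_nhdsWithin] with θ hθ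
  have hθ : θ ≠ 0 := (mem_Ioi.1 hθ).ne'
  rcases eq_or_ne α 0 with rfl | hα
  · simp [sinRatio]
  · rw [sinc_of_ne_zero hθ, sinc_of_ne_zero (mul_ne_zero hα hθ), sinRatio]
    field_simp

theorem tendsto_sinRatio_nhdsLT_pi (h0 : 0 < α) (h1 : α < 1) :
    Tendsto (sinRatio α) (𝓝[<] π) atTop := by
  have hnum : Tendsto (fun θ ↦ sin (α * θ)) (𝓝[<] π) (𝓝 (sin (α * π))) :=
    (Continuous.tendsto (by fun_prop) π).mono_left nhdsWithin_le_nhds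
  have hnum_pos : 0 < sin (α * π) :=
    sin_pos_of_pos_of_lt_pi (by positivity) (mul_lt_of_lt_one_left pi_pos h1)
  have hden : Tendsto sin (𝓝[<] π) (𝓝[>] 0) := by
    refine tendsto_nhdsWithin_iff.2 ⟨?_, ?_⟩
    · simpa using (continuous_sin.tendsto π).mono_left (nhdsWithin_le_nhds (s := Iio π))
    · filter_upwards [Ioo_mem_nhdsLT pi_pos] with θ hθ using sin_pos_of_mem_Ioo hθ
  exact hnum.pos_mul_atTop hnum_pos (tendsto_inv_nhdsGT_zero.comp hden)

/-- The Zolotarev function `A(θ)` of Kanter's integral representation, which is minus the phase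
along the steepest-descent curve for `x = 1`. -/
noncomputable def zolotarevFn (α θ : ℝ) : ℝ :=
  sinRatio α θ ^ (α / (1 - α)) * sinRatio (1 - α) θ

theorem le_zolotarevFn (h0 : 0 < α) (h1 : α < 1) (hθ : θ ∈ Ioo 0 π) :
    α ^ (α / (1 - α)) * (1 - α) ≤ zolotarevFn α θ := by
  have h1' : 0 < 1 - α := sub_pos.2 h1
  have hα := le_sinRatio h0.le h1.le hθ
  have hα' := le_sinRatio h1'.le (sub_le_self 1 h0.le) hθ
  have hq := sinRatio_pos h0 h1.le hθ
  have : 0 ≤ α / (1 - α) := by positivity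
  rw [zolotarevFn]
  gcongr

theorem zolotarevFn_pos (h0 : 0 < α) (h1 : α < 1) (hθ : θ ∈ Ioo 0 π) : 0 < zolotarevFn α θ :=
  mul_pos (rpow_pos_of_pos (sinRatio_pos h0 h1.le hθ) _)
    (sinRatio_pos (sub_pos.2 h1) (sub_le_self 1 h0.le) hθ)

theorem intervalIntegrable_exp_neg_mul_zolotarevFn (h0 : 0 < α) (h1 : α < 1) {y : ℝ}
    (hy : 0 ≤ y) :
    IntervalIntegrable (fun θ ↦ exp (-(y * zolotarevFn α θ))) volume 0 π := by
  rw [intervalIntegrable_iff_integrableOn_Ioo_of_le pi_pos.le]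
  refine Measure.integrableOn_of_bounded (M := 1) (by simp)
    (Measurable.aestronglyMeasurable (by unfold zolotarevFn sinRatio; fun_prop))
    (ae_restrict_of_forall_mem measurableSet_Ioo fun θ hθ ↦ ?_)
  rw [norm_eq_abs, abs_exp, exp_le_one_iff, neg_nonpos]
  exact mul_nonneg hy (zolotarevFn_pos h0 h1 hθ).le

end SinRatio

section SteepestDescent

variable {α x θ : ℝ}

/-- The real part `ρ(θ)` of the steepest-descent curve `θ ↦ ρ(θ) + iθ`, along which `wrightPhase`
is real. -/
noncomputable def steepestDescent (α x θ : ℝ) : ℝ :=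
  log (x * sinRatio α θ) / (1 - α)

theorem exp_mul_steepestDescent (α : ℝ) (h : 0 < x * sinRatio α θ) :
    exp (α * steepestDescent α x θ) = (x * sinRatio α θ) ^ (α / (1 - α)) := by
  rw [steepestDescent, rpow_def_of_pos h]
  ring_nf

theorem exp_steepestDescent (h1 : α ≠ 1) (h : 0 < x * sinRatio α θ) :
    exp (steepestDescent α x θ) = exp (α * steepestDescent α x θ) * (x * sinRatio α θ) := by
  have hlog : log (x * sinRatio α θ) = (1 - α) * steepestDescent α x θ :=
    (mul_div_cancel₀ _ (sub_ne_zero.2 h1.symm)).symm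
  rw [← exp_log h, ← exp_add, hlog]
  ring_nf

theorem im_wrightPhase_steepestDescent (h0 : 0 < α) (h1 : α < 1) (hx : 0 < x)
    (hθ : θ ∈ Ioo 0 π) :
    (wrightPhase α x (steepestDescent α x θ + θ * I)).im = 0 := by
  have hsin : sinRatio α θ * sin θ = sin (α * θ) :=
    div_mul_cancel₀ _ (sin_pos_of_mem_Ioo hθ).ne'
  rw [im_wrightPhase, exp_steepestDescent h1.ne (mul_pos hx (sinRatio_pos h0 h1.le hθ)), ← hsin]
  ring

theorem re_wrightPhase_steepestDescent (h0 : 0 < α) (h1 : α < 1) (hx : 0 < x)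
    (hθ : θ ∈ Ioo 0 π) :
    (wrightPhase α x (steepestDescent α x θ + θ * I)).re =
      -(x ^ (1 / (1 - α)) * zolotarevFn α θ) := by
  have h1' : 1 - α ≠ 0 := (sub_pos.2 h1).ne'
  have hq := sinRatio_pos h0 h1.le hθ
  have hratio : sinRatio α θ * cos θ - cos (α * θ) = -sinRatio (1 - α) θ := by
    have := (sin_pos_of_mem_Ioo hθ).ne'
    rw [sinRatio, sinRatio, one_sub_mul, sin_sub]
    field_simp
    ring
  have hpow : x ^ (1 / (1 - α)) = x ^ (α / (1 - α)) * x := by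
    rw [← rpow_add_one hx.ne']
    congr 1
    field_simp
    ring
  calc (wrightPhase α x (steepestDescent α x θ + θ * I)).re
      = x * exp (α * steepestDescent α x θ) * (sinRatio α θ * cos θ - cos (α * θ)) := by
        rw [re_wrightPhase, exp_steepestDescent h1.ne (mul_pos hx hq)]
        ring
    _ = -(x ^ (1 / (1 - α)) * zolotarevFn α θ) := by
        rw [hratio, exp_mul_steepestDescent α (mul_pos hx hq), mul_rpow hx.le hq.le, hpow,
          zolotarevFn]
        ring

theorem differentiableAt_steepestDescent (h0 : 0 < α) (h1 : α < 1) (hx : 0 < x)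
    (hθ : θ ∈ Ioo 0 π) :
    DifferentiableAt ℝ (steepestDescent α x) θ := by
  have hsin : sin θ ≠ 0 := (sin_pos_of_mem_Ioo hθ).ne'
  have hq : x * (sin (α * θ) / sin θ) ≠ 0 := (mul_pos hx (sinRatio_pos h0 h1.le hθ)).ne'
  unfold steepestDescent sinRatio
  fun_prop (disch := assumption)

theorem tendsto_steepestDescent_nhdsGT_zero (h0 : α ≠ 0) (hx : x ≠ 0) :
    Tendsto (steepestDescent α x) (𝓝[>] 0) (𝓝 (log (x * α) / (1 - α))) :=
  (((tendsto_sinRatio_nhdsGT_zero α).const_mul x).log (mul_ne_zero hx h0)).div_const _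

theorem tendsto_steepestDescent_nhdsLT_pi (h0 : 0 < α) (h1 : α < 1) (hx : 0 < x) :
    Tendsto (steepestDescent α x) (𝓝[<] π) atTop :=
  (tendsto_log_atTop.comp ((tendsto_sinRatio_nhdsLT_pi h0 h1).const_mul_atTop hx)).atTop_div_const
    (sub_pos.2 h1)

section Primitive

variable {H : ℂ → ℂ} (hH : ∀ w, HasDerivAt H (Complex.exp (wrightPhase α x w)) w)
  (hreal : ∀ u : ℝ, (H u).im = 0)

include hH hreal

theorem tendsto_im_primitive_steepestDescent_nhdsGT_zero (h0 : α ≠ 0) (hx : x ≠ 0) :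
    Tendsto (fun θ : ℝ ↦ (H (steepestDescent α x θ + θ * I)).im) (𝓝[>] 0) (𝓝 0) := by
  have hpath : Tendsto (fun θ : ℝ ↦ (steepestDescent α x θ : ℂ) + θ * I) (𝓝[>] 0)
      (𝓝 ((log (x * α) / (1 - α) : ℝ) + (0 : ℝ) * I)) :=
    (tendsto_steepestDescent_nhdsGT_zero h0 hx).ofReal.add
      ((tendsto_id.mono_left nhdsWithin_le_nhds).ofReal.mul_const I)
  rw [Complex.ofReal_zero, zero_mul, add_zero] at hpath
  have hlim := ((Complex.continuous_im.tendsto _).comp (hH _).continuousAt.tendsto).comp hpath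
  rwa [hreal] at hlim

theorem tendsto_im_primitive_steepestDescent_nhdsLT_pi (h0 : 0 < α) (h1 : α < 1) (hx : 0 < x) :
    Tendsto (fun θ : ℝ ↦ (H (steepestDescent α x θ + θ * I)).im) (𝓝[<] π)
      (𝓝 (π + ∫ r in Ioi 0, (hankelIntegrand α (-x * Complex.exp (α * π * I)) r).im)) := by
  have hρ := tendsto_steepestDescent_nhdsLT_pi h0 h1 hx
  have hcut := (tendsto_im_primitive_atTop hH hreal h0 h1).comp hρ
  have hgap := (Complex.continuous_im.tendsto 0).comp
    (tendsto_primitive_sub_nhdsLT_pi h1 hx.le hH hρ)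
  simpa using hcut.sub hgap

end Primitive

theorem integral_exp_neg_mul_zolotarevFn (h0 : 0 < α) (h1 : α < 1) (hx : 0 < x) :
    ∫ θ in (0 : ℝ)..π, exp (-(x ^ (1 / (1 - α)) * zolotarevFn α θ)) =
      π + ∫ r in Ioi 0, (hankelIntegrand α (-x * Complex.exp (α * π * I)) r).im := by
  obtain ⟨H, hH, hreal⟩ := exists_primitive_exp_wrightPhase α x
  have hderiv : ∀ θ ∈ Ioo 0 π, HasDerivAt
      (fun θ : ℝ ↦ (H (steepestDescent α x θ + θ * I)).im)
      (exp (-(x ^ (1 / (1 - α)) * zolotarevFn α θ))) θ := fun θ hθ ↦ by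
    rw [← re_wrightPhase_steepestDescent h0 h1 hx hθ]
    exact hasDerivAt_im_primitive_path hH
      (differentiableAt_steepestDescent h0 h1 hx hθ).hasDerivAt
      (im_wrightPhase_steepestDescent h0 h1 hx hθ)
  rw [intervalIntegral.integral_eq_sub_of_hasDerivAt_of_tendsto pi_pos hderiv
    (intervalIntegrable_exp_neg_mul_zolotarevFn h0 h1 (by positivity))
    (tendsto_im_primitive_steepestDescent_nhdsGT_zero hH hreal h0.ne' hx.ne')
    (tendsto_im_primitive_steepestDescent_nhdsLT_pi hH hreal h0 h1 hx), sub_zero]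

theorem wrightFn_neg_eq_integral (h0 : 0 < α) (h1 : α < 1) (hx : 0 < x) :
    wrightFn (-α) 1 (-x) =
      (∫ θ in (0 : ℝ)..π, exp (-(x ^ (1 / (1 - α)) * zolotarevFn α θ))) / π := by
  rw [wrightFn_neg_eq_one_add_integral h0 h1, integral_exp_neg_mul_zolotarevFn h0 h1 hx, add_div,
    div_self pi_ne_zero]

theorem wrightFn_neg_nonneg (h0 : 0 < α) (h1 : α < 1) (hx : 0 < x) :
    0 ≤ wrightFn (-α) 1 (-x) := by
  rw [wrightFn_neg_eq_integral h0 h1 hx]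
  exact div_nonneg (intervalIntegral.integral_nonneg pi_pos.le fun _ _ ↦ (exp_pos _).le) pi_pos.le

theorem wrightFn_neg_mul_le (h0 : 0 < α) (h1 : α < 1) (hx : 0 < x) {c : ℝ} (hc : 1 ≤ c) :
    wrightFn (-α) 1 (-(c * x)) ≤
      exp (-((c ^ (1 / (1 - α)) - 1) * (α ^ (α / (1 - α)) * (1 - α)) * x ^ (1 / (1 - α)))) *
        wrightFn (-α) 1 (-x) := by
  have : 0 < 1 - α := sub_pos.2 h1
  have hc0 : 0 < c := one_pos.trans_le hc
  have hk : 0 ≤ c ^ (1 / (1 - α)) - 1 := sub_nonneg.2 (one_le_rpow hc (by positivity))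
  rw [wrightFn_neg_eq_integral h0 h1 (mul_pos hc0 hx), wrightFn_neg_eq_integral h0 h1 hx,
    ← mul_div_assoc, ← intervalIntegral.integral_const_mul, mul_rpow hc0.le hx.le]
  gcongr
  refine intervalIntegral.integral_mono_on_of_le_Ioo pi_pos.le
    (intervalIntegrable_exp_neg_mul_zolotarevFn h0 h1 (by positivity))
    ((intervalIntegrable_exp_neg_mul_zolotarevFn h0 h1 (by positivity)).const_mul _)
    fun θ hθ ↦ ?_
  rw [← exp_add, exp_le_exp]
  have hA := mul_le_mul_of_nonneg_left (le_zolotarevFn h0 h1 hθ)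
    (mul_nonneg hk (rpow_nonneg hx.le (1 / (1 - α))))
  linarith

end SteepestDescent

theorem stmt12_general {α : ℝ} (hα : α ∈ Ioo 0 1) {c : ℝ} (hc : 1 < c) :
    Tendsto (fun x ↦ wrightFn (-α) 1 (-(c * x)) / wrightFn (-α) 1 (-x)) atTop (𝓝 0) := by
  obtain ⟨h0, h1⟩ := hα
  have hp : 0 < 1 / (1 - α) := one_div_pos.2 (sub_pos.2 h1)
  have hrate : 0 < (c ^ (1 / (1 - α)) - 1) * (α ^ (α / (1 - α)) * (1 - α)) :=
    mul_pos (sub_pos.2 (one_lt_rpow hc hp)) (mul_pos (rpow_pos_of_pos h0 _) (sub_pos.2 h1))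
  refine squeeze_zero' ?_ ?_ (tendsto_exp_neg_atTop_nhds_zero.comp
    ((tendsto_rpow_atTop hp).const_mul_atTop hrate))
  · filter_upwards [eventually_gt_atTop 0] with x hx
    exact div_nonneg (wrightFn_neg_nonneg h0 h1 (mul_pos (one_pos.trans hc) hx))
      (wrightFn_neg_nonneg h0 h1 hx)
  · filter_upwards [eventually_gt_atTop 0] with x hx
    exact div_le_of_le_mul₀ (wrightFn_neg_nonneg h0 h1 hx) (exp_pos _).le
      (wrightFn_neg_mul_le h0 h1 hx hc.le)

theorem stmt12 (α : ℝ) (hα : α ∈ Set.Ioo (0 : ℝ) 1) :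
    Tendsto (fun t : ℝ =>
        wrightFn (-α) 1 (-(2 * t ^ (1 - α))) / wrightFn (-α) 1 (-(t ^ (1 - α))))
      atTop (nhds 0) :=
  (stmt12_general hα one_lt_two).comp (tendsto_rpow_atTop (sub_pos.2 hα.2))
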